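/- For all f, g ∈ L¹(ℝ³), ‖(1/p⁰)Q⁻(f,f) − (1/p⁰)Q⁻(g,g)‖ ≤ C(‖f‖ + ‖g‖)·‖f − g‖. -/

import Mathlib

/-!
The loss term factors as `Q⁻(f,g)(p) = αβ² f(p) ∫ k(p,q) g(q) dq`, where the kernel
`k(p,q) = (1/q⁰) ∫ S₀(p,q,p',q') dω` satisfies `|k| ≤ 4πC₁`, because `q⁰ ≥ 1` and the unit sphere
has area `4π`. Writing `A h (p) = ∫ k(p,q) h(q) dq`, the bound on `k` gives
`|A h (p)| ≤ 4πC₁‖h‖` (`abs_lossAvg_le`), and by linearity of `A`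
`f·A f − g·A g = f·A(f − g) + (f − g)·A g`. Since `1/p⁰ ≤ 1`, integrating this identity in `p`
yields the estimate. Measurability of `q ↦ k(p,q)` is what makes `A` linear on `L¹`.
-/

open MeasureTheory Real

noncomputable section

/-- Momentum space `ℝ³`. -/
abbrev E3 : Type := EuclideanSpace ℝ (Fin 3)

/-- The scalar product associated with the Bianchi type I metric coefficients `α = a(t)`,
`β = b(t)`: `p̄·q̄ = α²p¹q¹ + β²(p²q² + p³q³)`. -/
def mdot (α β : ℝ) (p q : E3) : ℝ :=
  α ^ 2 * p 0 * q 0 + β ^ 2 * (p 1 * q 1 + p 2 * q 2)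

/-- `p⁰ = √(1 + |p̄|²)` where `|p̄|² = p̄·p̄`. -/
def pZ (α β : ℝ) (p : E3) : ℝ := Real.sqrt (1 + mdot α β p p)

/-- `ω` normalized to unit length for the metric norm. -/
def omHat (α β : ℝ) (ω : E3) : E3 := (Real.sqrt (mdot α β ω ω))⁻¹ • ω

/-- The total energy `e = p⁰ + q⁰`. -/
def collE (α β : ℝ) (p q : E3) : ℝ := pZ α β p + pZ α β q

/-- The function `C(p̄, q̄, ω)` of Glassey's representation of post-collisional momenta. -/
def collC (α β : ℝ) (p q ω : E3) : ℝ :=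
  2 * pZ α β p * pZ α β q * collE α β p q *
      mdot α β (omHat α β ω) ((pZ α β q)⁻¹ • q - (pZ α β p)⁻¹ • p) /
    (collE α β p q ^ 2 - mdot α β (omHat α β ω) (p + q) ^ 2)

/-- The post-collisional momentum `p̄′ = p̄ + C(p̄,q̄,ω)ω̂`. -/
def pPr (α β : ℝ) (p q ω : E3) : E3 := p + collC α β p q ω • omHat α β ω

/-- The post-collisional momentum `q̄′ = q̄ − C(p̄,q̄,ω)ω̂`. -/
def qPr (α β : ℝ) (p q ω : E3) : E3 := q - collC α β p q ω • omHat α β ω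

/-- The surface measure on the unit sphere `S² ⊂ ℝ³`. -/
def sphMeas : Measure (Metric.sphere (0 : E3) 1) := (volume : Measure E3).toSphere

/-- The gain term `Q⁺(f,g)`. -/
def Qplus (α β : ℝ) (S₀ : E3 → E3 → E3 → E3 → ℝ) (f g : E3 → ℝ) (p : E3) : ℝ :=
  α * β ^ 2 *
    ∫ q : E3, (pZ α β q)⁻¹ *
      ∫ ω : Metric.sphere (0 : E3) 1,
        f (pPr α β p q ω) * g (qPr α β p q ω) *
          S₀ p q (pPr α β p q ω) (qPr α β p q ω) ∂sphMeas

/-- The loss term `Q⁻(f,g)`. -/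
def Qminus (α β : ℝ) (S₀ : E3 → E3 → E3 → E3 → ℝ) (f g : E3 → ℝ) (p : E3) : ℝ :=
  α * β ^ 2 *
    ∫ q : E3, (pZ α β q)⁻¹ *
      ∫ ω : Metric.sphere (0 : E3) 1,
        f p * g q * S₀ p q (pPr α β p q ω) (qPr α β p q ω) ∂sphMeas

/-- The collision operator `Q = Q⁺ − Q⁻`. -/
def Qcoll (α β : ℝ) (S₀ : E3 → E3 → E3 → E3 → ℝ) (f g : E3 → ℝ) (p : E3) : ℝ :=
  Qplus α β S₀ f g p - Qminus α β S₀ f g p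

/-- The space `L¹(ℝ³)`. -/
abbrev L1 : Type := Lp ℝ 1 (volume : Measure E3)

/-- Membership in `X_r = {f ∈ L¹(ℝ³) : f ≥ 0 a.e., ‖f‖ ≤ r}`. -/
def memX (r : ℝ) (f : L1) : Prop := (0 ≤ᵐ[volume] ⇑f) ∧ ‖f‖ ≤ r

end

/-- The kernel `k(p,q) = (1/q⁰) ∫ S₀(p,q,p',q') dω` of the loss term. -/
noncomputable def lossKernel (α β : ℝ) (S₀ : E3 → E3 → E3 → E3 → ℝ) (p q : E3) : ℝ :=
  (pZ α β q)⁻¹ * ∫ ω : Metric.sphere (0 : E3) 1,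
    S₀ p q (pPr α β p q ω) (qPr α β p q ω) ∂sphMeas

/-- The average `A h (p) = ∫ k(p,q) h(q) dq` of `h` against the loss kernel. -/
noncomputable def lossAvg (α β : ℝ) (S₀ : E3 → E3 → E3 → E3 → ℝ) (h : E3 → ℝ) (p : E3) : ℝ :=
  ∫ q : E3, lossKernel α β S₀ p q * h q

lemma Qminus_eq_lossAvg (α β : ℝ) (S₀ : E3 → E3 → E3 → E3 → ℝ) (f g : E3 → ℝ) (p : E3) :
    Qminus α β S₀ f g p = α * β ^ 2 * (f p * lossAvg α β S₀ g p) := by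
  unfold Qminus lossAvg lossKernel
  rw [← integral_const_mul (f p)]
  congr 2
  ext q
  rw [integral_const_mul]
  ring

lemma one_le_pZ (α β : ℝ) (p : E3) : 1 ≤ pZ α β p := by
  unfold pZ mdot
  rw [Real.one_le_sqrt]
  nlinarith [sq_nonneg (α * p 0), sq_nonneg (β * p 1), sq_nonneg (β * p 2)]

lemma inv_pZ_nonneg (α β : ℝ) (p : E3) : 0 ≤ (pZ α β p)⁻¹ :=
  inv_nonneg.2 (zero_le_one.trans (one_le_pZ α β p))

lemma inv_pZ_le_one (α β : ℝ) (p : E3) : (pZ α β p)⁻¹ ≤ 1 :=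
  inv_le_one_of_one_le₀ (one_le_pZ α β p)

instance isFiniteMeasure_sphMeas : IsFiniteMeasure sphMeas := by
  unfold sphMeas
  infer_instance

lemma sphMeas_real_univ : sphMeas.real Set.univ = 4 * π := by
  unfold sphMeas
  rw [Measure.toSphere_real_apply_univ, Measure.real, EuclideanSpace.volume_ball_fin_three]
  have h : (0 : ℝ) ≤ π * 4 / 3 := by positivity
  simp only [ENNReal.ofReal_one, one_pow, one_mul, ENNReal.toReal_ofReal h, finrank_euclideanSpace,
    Fintype.card_fin]
  push_cast
  ring

lemma measurable_mdot {Z : Type*} [MeasurableSpace Z] (α β : ℝ) {u v : Z → E3}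
    (hu : Measurable u) (hv : Measurable v) : Measurable fun z => mdot α β (u z) (v z) := by
  unfold mdot
  fun_prop

section Kernel

variable {C₁ α β : ℝ} {S₀ : E3 → E3 → E3 → E3 → ℝ}

lemma abs_lossKernel_le
    (h0 : ∀ p q p' q', 0 ≤ S₀ p q p' q') (h1 : ∀ p q p' q', S₀ p q p' q' ≤ C₁) (p q : E3) :
    |lossKernel α β S₀ p q| ≤ 4 * π * C₁ := by
  have hint : |∫ ω : Metric.sphere (0 : E3) 1,
      S₀ p q (pPr α β p q ω) (qPr α β p q ω) ∂sphMeas| ≤ C₁ * (4 * π) := by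
    rw [← sphMeas_real_univ, ← Real.norm_eq_abs]
    refine norm_integral_le_of_norm_le_const (.of_forall fun ω => ?_)
    rw [Real.norm_eq_abs, abs_of_nonneg (h0 _ _ _ _)]
    exact h1 _ _ _ _
  unfold lossKernel
  rw [abs_mul, abs_of_nonneg (inv_pZ_nonneg α β q)]
  calc _ ≤ 1 * (C₁ * (4 * π)) :=
        mul_le_mul (inv_pZ_le_one α β q) hint (abs_nonneg _) zero_le_one
    _ = 4 * π * C₁ := by ring

lemma measurable_lossKernel
    (hS : Measurable fun x : (E3 × E3) × E3 × E3 => S₀ x.1.1 x.1.2 x.2.1 x.2.2) (p : E3) :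
    Measurable (lossKernel α β S₀ p) := by
  have hZ : Measurable (pZ α β) := by
    unfold pZ
    exact (measurable_const.add (measurable_mdot α β measurable_id measurable_id)).sqrt
  have hω : Measurable fun z : E3 × Metric.sphere (0 : E3) 1 => omHat α β z.2 := by
    have h2 : Measurable fun z : E3 × Metric.sphere (0 : E3) 1 => (z.2 : E3) :=
      measurable_subtype_coe.comp measurable_snd
    unfold omHat
    exact (measurable_mdot α β h2 h2).sqrt.inv.smul h2
  have hc : Measurable fun z : E3 × Metric.sphere (0 : E3) 1 => collC α β p z.1 z.2 := by
    have hq : Measurable fun z : E3 × Metric.sphere (0 : E3) 1 => pZ α β z.1 :=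
      hZ.comp measurable_fst
    have he : Measurable fun z : E3 × Metric.sphere (0 : E3) 1 => collE α β p z.1 :=
      measurable_const.add hq
    have hv := measurable_mdot α β hω
      ((hq.inv.smul measurable_fst).sub_const ((pZ α β p)⁻¹ • p))
    have hs := measurable_mdot α β hω (measurable_fst.const_add p)
    unfold collC
    exact (((hq.const_mul (2 * pZ α β p)).mul he).mul hv).div
      ((he.pow_const 2).sub (hs.pow_const 2))
  have hp' : Measurable fun z : E3 × Metric.sphere (0 : E3) 1 => pPr α β p z.1 z.2 := by
    unfold pPr
    exact (hc.smul hω).const_add p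
  have hq' : Measurable fun z : E3 × Metric.sphere (0 : E3) 1 => qPr α β p z.1 z.2 := by
    unfold qPr
    exact measurable_fst.sub (hc.smul hω)
  have hS' : Measurable fun z : E3 × Metric.sphere (0 : E3) 1 =>
      S₀ p z.1 (pPr α β p z.1 z.2) (qPr α β p z.1 z.2) :=
    hS.comp ((measurable_const.prodMk measurable_fst).prodMk (hp'.prodMk hq'))
  exact hZ.inv.mul hS'.stronglyMeasurable.integral_prod_right'.measurable

lemma integrable_lossKernel_mul
    (hS : Measurable fun x : (E3 × E3) × E3 × E3 => S₀ x.1.1 x.1.2 x.2.1 x.2.2)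
    (h0 : ∀ p q p' q', 0 ≤ S₀ p q p' q') (h1 : ∀ p q p' q', S₀ p q p' q' ≤ C₁)
    (p : E3) (h : L1) : Integrable fun q => lossKernel α β S₀ p q * h q :=
  (L1.integrable_coeFn h).bdd_mul (c := 4 * π * C₁)
    (measurable_lossKernel hS p).aestronglyMeasurable
    (.of_forall fun q => abs_lossKernel_le h0 h1 p q)

lemma abs_lossAvg_le
    (h0 : ∀ p q p' q', 0 ≤ S₀ p q p' q') (h1 : ∀ p q p' q', S₀ p q p' q' ≤ C₁)
    (p : E3) (h : L1) : |lossAvg α β S₀ h p| ≤ 4 * π * C₁ * ‖h‖ := by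
  rw [L1.norm_eq_integral_norm, ← integral_const_mul, ← Real.norm_eq_abs]
  refine norm_integral_le_of_norm_le ((L1.integrable_coeFn h).norm.const_mul _)
    (.of_forall fun q => ?_)
  rw [norm_mul]
  exact mul_le_mul_of_nonneg_right (abs_lossKernel_le h0 h1 p q) (norm_nonneg _)

lemma lossAvg_sub
    (hS : Measurable fun x : (E3 × E3) × E3 × E3 => S₀ x.1.1 x.1.2 x.2.1 x.2.2)
    (h0 : ∀ p q p' q', 0 ≤ S₀ p q p' q') (h1 : ∀ p q p' q', S₀ p q p' q' ≤ C₁)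
    (p : E3) (f g : L1) :
    lossAvg α β S₀ (f - g : L1) p = lossAvg α β S₀ f p - lossAvg α β S₀ g p := by
  unfold lossAvg
  rw [← integral_sub (integrable_lossKernel_mul hS h0 h1 p f)
    (integrable_lossKernel_mul hS h0 h1 p g)]
  refine integral_congr_ae ?_
  filter_upwards [Lp.coeFn_sub f g] with q hq
  rw [hq, Pi.sub_apply, mul_sub]

end Kernel

theorem statement_3
    (C₀ C₁ α β : ℝ) (hC₀ : 0 < C₀) (hC₁ : 0 < C₁) (hα : C₀ ≤ α) (hβ : C₀ ≤ β)
    (S₀ : E3 → E3 → E3 → E3 → ℝ)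
    (hS₀meas : Measurable fun x : (E3 × E3) × E3 × E3 => S₀ x.1.1 x.1.2 x.2.1 x.2.2)
    (hS₀nonneg : ∀ p q p' q', 0 ≤ S₀ p q p' q')
    (hS₀bdd : ∀ p q p' q', S₀ p q p' q' ≤ C₁)
    (hS₀symm : ∀ p q p' q', S₀ p q p' q' = S₀ p' q' p q)
    (f g : L1) :
    ∫ p : E3, |(pZ α β p)⁻¹ * Qminus α β S₀ (⇑f) (⇑f) p -
        (pZ α β p)⁻¹ * Qminus α β S₀ (⇑g) (⇑g) p| ≤ 4 * Real.pi * C₁ * α * β ^ 2 * (‖f‖ + ‖g‖) * ‖f - g‖ := by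
  have hαβ : 0 ≤ α * β ^ 2 := mul_nonneg (hC₀.le.trans hα) (sq_nonneg β)
  set K : ℝ := 4 * π * C₁ with hK
  have hf := (L1.integrable_coeFn f).norm.mul_const (K * ‖f - g‖)
  have hd := (L1.integrable_coeFn (f - g)).norm.mul_const (K * ‖g‖)
  have hG := (hf.add hd).const_mul (α * β ^ 2)
  -- Only the majorant has to be integrable: the Bochner integral of a nonnegative function is
  -- monotone under an integrable upper bound.
  refine (integral_mono_of_nonneg (.of_forall fun p => abs_nonneg _) hG ?_).trans_eq ?_
  · filter_upwards [Lp.coeFn_sub f g] with p hp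
    have hA := abs_lossAvg_le (α := α) (β := β) hS₀nonneg hS₀bdd p (f - g)
    have hB := abs_lossAvg_le (α := α) (β := β) hS₀nonneg hS₀bdd p g
    have hsplit : (pZ α β p)⁻¹ * Qminus α β S₀ f f p - (pZ α β p)⁻¹ * Qminus α β S₀ g g p =
        (pZ α β p)⁻¹ * (α * β ^ 2 * (f p * lossAvg α β S₀ (f - g : L1) p +
          (f - g : L1) p * lossAvg α β S₀ g p)) := by
      rw [Qminus_eq_lossAvg, Qminus_eq_lossAvg, lossAvg_sub hS₀meas hS₀nonneg hS₀bdd, hp,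
        Pi.sub_apply]
      ring
    rw [hsplit, abs_mul, abs_of_nonneg (inv_pZ_nonneg α β p)]
    refine (mul_le_of_le_one_left (abs_nonneg _) (inv_pZ_le_one α β p)).trans ?_
    rw [abs_mul, abs_of_nonneg hαβ]
    refine mul_le_mul_of_nonneg_left ((abs_add_le _ _).trans (add_le_add ?_ ?_)) hαβ
    · rw [abs_mul]
      exact mul_le_mul_of_nonneg_left hA (abs_nonneg _)
    · rw [abs_mul]
      exact mul_le_mul_of_nonneg_left hB (abs_nonneg _)
  · rw [integral_const_mul]
    simp only [Pi.add_apply]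
    rw [integral_add hf hd, integral_mul_const, integral_mul_const,
      ← L1.norm_eq_integral_norm, ← L1.norm_eq_integral_norm]
    ring
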